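/- Fix α > 0, let Δ : 𝕋 → [0,1] be measurable, and let μ be the measure on the closed unit disk given by dμ = (1-|z|²)^{α-1} dA + Δ² dm. Then the multiplication operator M_z : P²(μ) → P²(μ), f ↦ z·f, is completely non-isometric — i.e., there exists no nonzero f ∈ P²(μ) with ∫ |z^n f|² dμ = ∫ |f|² dμ for all positive integers n — if and only if P²(μ) contains no nonzero element f ∈ L²(μ) which vanishes μ-a.e. on 𝔻 (i.e., which lives only on the circle 𝕋). -/

import Mathlib

/-!
Since `μ` is carried by the closed unit disk, `‖z * f z‖ ≤ ‖f z‖` holds `μ`-a.e., with equality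
only where `f z = 0` or `‖z‖ = 1`. As `∫ ‖f‖² dμ` is finite, equality of the integrals of
`‖z * f‖²` and `‖f‖²` (the case `n = 1`) forces pointwise equality a.e., that is, `f = 0` a.e. on
`𝔻`. Conversely, if `f = 0` a.e. on `𝔻`, then `‖z ^ n * f z‖ = ‖f z‖` a.e. for every `n`.
Hence for each individual `f ∈ L²(μ)` the isometry condition and the vanishing condition are
equivalent (`isometric_iff_vanish`), and the theorem follows by restricting to `f ∈ P²(μ)`.
-/

open MeasureTheory
open scoped ENNReal NNReal

/-- Normalized area measure on the open unit disk `𝔻 ⊆ ℂ`, so that `dA(𝔻) = 1`. -/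
noncomputable def dA : Measure ℂ :=
  (ENNReal.ofReal Real.pi)⁻¹ • (volume.restrict (Metric.ball (0 : ℂ) 1))

/-- Normalized arclength measure on the unit circle `𝕋 ⊆ ℂ`, so that `m(𝕋) = 1`. -/
noncomputable def mT : Measure ℂ :=
  (ENNReal.ofReal (2 * Real.pi))⁻¹ •
    (Measure.map (fun θ : ℝ => Complex.exp (θ * Complex.I))
      (volume.restrict (Set.Ioc (0 : ℝ) (2 * Real.pi))))

/-- `P²(μ)`: the closure in `L²(μ)` of the (elements represented by) analytic
polynomials. -/
noncomputable def P2 (μ : Measure ℂ) : Set (Lp ℂ 2 μ) :=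
  closure {g : Lp ℂ 2 μ | ∃ p : Polynomial ℂ, ⇑g =ᵐ[μ] fun z => p.eval z}

lemma mT_ae_norm : ∀ᵐ z ∂mT, ‖z‖ = 1 := by
  unfold mT
  apply Measure.ae_smul_measure
  rw [ae_map_iff (by fun_prop) (measurableSet_eq_fun (by fun_prop) (by fun_prop))]
  exact Filter.Eventually.of_forall fun θ => Complex.norm_exp_ofReal_mul_I θ

lemma dA_ae_norm : ∀ᵐ z ∂dA, ‖z‖ < 1 := by
  unfold dA
  apply Measure.ae_smul_measure
  filter_upwards [ae_restrict_mem Metric.isOpen_ball.measurableSet] with z hz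
  simpa using hz

/-- On a measure carried by the closed unit disk, `f ∈ L²` satisfies `‖zⁿ f‖ = ‖f‖` for all
`n ≥ 1` exactly when it lives on the unit circle. -/
lemma isometric_iff_vanish (μ : Measure ℂ) (hμ : ∀ᵐ z ∂μ, ‖z‖ ≤ 1) (f : Lp ℂ 2 μ) :
    (∀ n : ℕ, 1 ≤ n →
        (∫⁻ z : ℂ, (‖z ^ n * f z‖₊ : ℝ≥0∞) ^ 2 ∂μ) = ∫⁻ z : ℂ, (‖f z‖₊ : ℝ≥0∞) ^ 2 ∂μ) ↔
    ∀ᵐ z ∂μ, z ∈ Metric.ball (0 : ℂ) 1 → f z = 0 := by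
  have hf : AEStronglyMeasurable f μ := Lp.aestronglyMeasurable f
  constructor
  · intro h
    have h1 := h 1 le_rfl
    simp only [pow_one] at h1
    have hfin : (∫⁻ z : ℂ, (‖f z‖₊ : ℝ≥0∞) ^ 2 ∂μ) ≠ ∞ := by
      have := lintegral_rpow_enorm_lt_top_of_eLpNorm_lt_top (p := 2) (by norm_num) (by norm_num)
        (Lp.eLpNorm_lt_top f)
      simpa [enorm_eq_nnnorm] using this.ne
    have hle : (fun z : ℂ => (‖z * f z‖₊ : ℝ≥0∞) ^ 2) ≤ᵐ[μ] fun z => (‖f z‖₊ : ℝ≥0∞) ^ 2 := by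
      filter_upwards [hμ] with z hz
      have : ‖z * f z‖₊ ≤ ‖f z‖₊ := by
        rw [nnnorm_mul]
        exact mul_le_of_le_one_left zero_le hz
      gcongr
    have heq := ae_eq_of_ae_le_of_lintegral_le hle (h1 ▸ hfin)
      (hf.aemeasurable.nnnorm.coe_nnreal_ennreal.pow_const 2) h1.ge
    filter_upwards [heq] with z hz hzb
    have hz1 : ‖z‖ < 1 := by simpa using hzb
    have h2n : ‖z * f z‖₊ ^ 2 = ‖f z‖₊ ^ 2 := by exact_mod_cast hz
    have h2 : ‖z * f z‖ ^ 2 = ‖f z‖ ^ 2 := congrArg NNReal.toReal h2n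
    have h3 : ‖z * f z‖ = ‖f z‖ := (sq_eq_sq₀ (norm_nonneg _) (norm_nonneg _)).1 h2
    rw [norm_mul] at h3
    by_contra h0
    have := norm_pos_iff.2 h0
    nlinarith
  · intro h n _
    apply lintegral_congr_ae
    filter_upwards [h, hμ] with z hz hz1
    rcases hz1.lt_or_eq with hlt | heq
    · simp [hz (by simpa using hlt)]
    · have : ‖z‖₊ = 1 := NNReal.eq heq
      simp [nnnorm_mul, nnnorm_pow, this]

/-- For `dμ = (1-|z|²)^{α-1} dA + Δ² dm`, the operator `M_z` on `P²(μ)` is completely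
non-isometric (no nonzero `f ∈ P²(μ)` with `∫ |zⁿ f|² dμ = ∫ |f|² dμ` for all `n ≥ 1`)
if and only if `P²(μ)` contains no nonzero element vanishing `μ`-a.e. on `𝔻`. -/
theorem stmt10 (α : ℝ) (hα : 0 < α) (Δ : ℂ → ℝ) (hΔmeas : Measurable Δ)
    (hΔ : ∀ z : ℂ, 0 ≤ Δ z ∧ Δ z ≤ 1)
    (μ : Measure ℂ)
    (hμ : μ = dA.withDensity (fun z => ENNReal.ofReal ((1 - ‖z‖ ^ 2) ^ (α - 1))) +
             mT.withDensity (fun z => ENNReal.ofReal ((Δ z) ^ 2))) :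
    (¬ ∃ f ∈ P2 μ, f ≠ 0 ∧ ∀ n : ℕ, 1 ≤ n →
        (∫⁻ z : ℂ, (‖z ^ n * f z‖₊ : ℝ≥0∞) ^ 2 ∂μ) = ∫⁻ z : ℂ, (‖f z‖₊ : ℝ≥0∞) ^ 2 ∂μ) ↔
    (¬ ∃ f ∈ P2 μ, f ≠ 0 ∧ ∀ᵐ z ∂μ, z ∈ Metric.ball (0 : ℂ) 1 → f z = 0) := by
  have hae : ∀ᵐ z ∂μ, ‖z‖ ≤ 1 := by
    rw [hμ, ae_add_measure_iff]
    exact ⟨(withDensity_absolutelyContinuous _ _).ae_le (dA_ae_norm.mono fun _ h => h.le),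
      (withDensity_absolutelyContinuous _ _).ae_le (mT_ae_norm.mono fun _ h => h.le)⟩
  simp only [isometric_iff_vanish μ hae]
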